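/- Suppose L is a metric flag labeled triangulation of the 2-sphere. If D₁ and D₂ are two distinct Seifert subcomplexes of L, then no 2-simplex of L is contained in both D₁ and D₂. -/

import Mathlib

open Geometry

/-- The ambient space for our simplicial complexes. -/
abbrev E3 : Type := EuclideanSpace ℝ (Fin 3)

noncomputable instance : DecidableEq E3 := Classical.decEq _

namespace CoxOrb

variable (L : SimplicialComplex ℝ E3) (m : E3 → E3 → ℕ)

/-- `L` is a labeled triangulation of the 2-sphere with edge labeling `m`:
`L` is finite, its underlying space is homeomorphic to the 2-sphere, and `m`
is symmetric with `m s t ≥ 2` on every edge `{s, t}` of `L`. -/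
structure IsLabeledS2 : Prop where
  finite : L.faces.Finite
  sphere : Nonempty (L.space ≃ₜ (Metric.sphere (0 : E3) 1 : Set E3))
  symm : ∀ s t : E3, m s t = m t s
  two_le : ∀ s t : E3, s ≠ t → ({s, t} : Finset E3) ∈ L.faces → 2 ≤ m s t

/-- `L` with labeling `m` is metric flag: three pairwise-joined vertices span a
2-simplex iff the corresponding angle sum `π/m_st + π/m_tu + π/m_us` exceeds `π`. -/
def MetricFlag : Prop :=
  ∀ s t u : E3, s ≠ t → t ≠ u → s ≠ u →
    ({s, t} : Finset E3) ∈ L.faces → ({t, u} : Finset E3) ∈ L.faces →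
    ({s, u} : Finset E3) ∈ L.faces →
    (({s, t, u} : Finset E3) ∈ L.faces ↔
      1 / (m s t : ℝ) + 1 / (m t u : ℝ) + 1 / (m u s : ℝ) > 1)

/-- The link of a vertex `s`, as a set of faces of `L`. -/
def link (s : E3) : Set (Finset E3) :=
  {F | F ∈ L.faces ∧ s ∉ F ∧ insert s F ∈ L.faces}

/-- The closed star of a vertex `s`: all faces of `L` contained in some face
containing `s`. -/
def star (s : E3) : Set (Finset E3) :=
  {F | F ∈ L.faces ∧ ∃ G ∈ L.faces, s ∈ G ∧ F ⊆ G}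

/-- The vertices of the link of `s`. -/
def linkVerts (s : E3) : Set E3 :=
  {v | v ≠ s ∧ ({s, v} : Finset E3) ∈ L.faces}

/-- A set of faces `A` is a full subcomplex of `L`: every face of `L` all of
whose vertices are vertices of `A` belongs to `A`. -/
def IsFullSubcomplex (A : Set (Finset E3)) : Prop :=
  A ⊆ L.faces ∧ ∀ F ∈ L.faces, (∀ v ∈ F, ({v} : Finset E3) ∈ A) → F ∈ A

/-- `s` is a 3-Euclidean vertex of `L`: it has valence three and the labels on
the three edges of its link have reciprocals summing to one. -/
def IsThreeEuclidean (s : E3) : Prop :=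
  ({s} : Finset E3) ∈ L.faces ∧
  ∃ s₀ s₁ s₂ : E3, s₀ ≠ s₁ ∧ s₁ ≠ s₂ ∧ s₀ ≠ s₂ ∧
    linkVerts L s = {s₀, s₁, s₂} ∧
    1 / (m s₀ s₁ : ℝ) + 1 / (m s₁ s₂ : ℝ) + 1 / (m s₂ s₀ : ℝ) = 1

/-- `s` is a 4-Euclidean vertex of `L`: it has valence four, its link is the
4-circuit on `v 0, v 1, v 2, v 3` (in cyclic order), and the labels on the
edges of the link are all `2`. -/
def IsFourEuclidean (s : E3) : Prop :=
  ({s} : Finset E3) ∈ L.faces ∧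
  ∃ v : Fin 4 → E3, Function.Injective v ∧
    linkVerts L s = {v 0, v 1, v 2, v 3} ∧
    (∀ i : Fin 4, ({s, v i, v (i + 1)} : Finset E3) ∈ L.faces) ∧
    (∀ i : Fin 4, m (v i) (v (i + 1)) = 2)

/-- `L` is the boundary complex of a 3-simplex: four pairwise-joined vertices
spanning four 2-simplices. -/
def IsBoundaryOfThreeSimplex : Prop :=
  ∃ a b c d : E3, a ≠ b ∧ a ≠ c ∧ a ≠ d ∧ b ≠ c ∧ b ≠ d ∧ c ≠ d ∧
    (∀ v : E3, ({v} : Finset E3) ∈ L.faces ↔ v = a ∨ v = b ∨ v = c ∨ v = d) ∧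
    ({a, b, c} : Finset E3) ∈ L.faces ∧ ({a, b, d} : Finset E3) ∈ L.faces ∧
    ({a, c, d} : Finset E3) ∈ L.faces ∧ ({b, c, d} : Finset E3) ∈ L.faces

/-- `L` is the suspension of a 3-gon. -/
def IsSuspensionOfThreeGon : Prop :=
  ∃ t t' s₀ s₁ s₂ : E3, [t, t', s₀, s₁, s₂].Pairwise (· ≠ ·) ∧
    (∀ v : E3, ({v} : Finset E3) ∈ L.faces ↔ v = t ∨ v = t' ∨ v = s₀ ∨ v = s₁ ∨ v = s₂) ∧
    ({s₀, s₁} : Finset E3) ∈ L.faces ∧ ({s₁, s₂} : Finset E3) ∈ L.faces ∧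
    ({s₀, s₂} : Finset E3) ∈ L.faces ∧
    ({t, s₀} : Finset E3) ∈ L.faces ∧ ({t, s₁} : Finset E3) ∈ L.faces ∧
    ({t, s₂} : Finset E3) ∈ L.faces ∧
    ({t', s₀} : Finset E3) ∈ L.faces ∧ ({t', s₁} : Finset E3) ∈ L.faces ∧
    ({t', s₂} : Finset E3) ∈ L.faces ∧
    ({t, t'} : Finset E3) ∉ L.faces

/-- The simplicial join of the subcomplex `Z` with the two points `t, t'`. -/
def joinSusp (Z : Set (Finset E3)) (t t' : E3) : Set (Finset E3) :=
  Z ∪ {{t}, {t'}} ∪ ((fun F => insert t F) '' Z) ∪ ((fun F => insert t' F) '' Z)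

/-- `T` is the right-angled suspension in `L` of the subcomplex `Z` with
suspension points `t, t'` (not joined by an edge of `T`): every edge from a
suspension point to a vertex of `Z` is labeled `2`. -/
structure IsRASuspData (T Z : Set (Finset E3)) (t t' : E3) : Prop where
  subset : T ⊆ L.faces
  zsubset : Z ⊆ L.faces
  zdown : ∀ F ∈ Z, ∀ G : Finset E3, G ⊆ F → G.Nonempty → G ∈ Z
  znonempty : Z.Nonempty
  tne : t ≠ t'
  t_notin : ∀ F ∈ Z, t ∉ F
  t'_notin : ∀ F ∈ Z, t' ∉ F
  labels : ∀ v : E3, ({v} : Finset E3) ∈ Z → m t v = 2 ∧ m t' v = 2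
  eq : T = joinSusp Z t t'

/-- `T` is a right-angled suspension in `L`. -/
def IsRASusp (T : Set (Finset E3)) : Prop :=
  ∃ Z t t', IsRASuspData L m T Z t t'

/-- The base `Z` of the suspension is neither a single vertex nor a single
edge, so that the suspension is infinite. -/
def InfiniteBase (Z : Set (Finset E3)) : Prop :=
  (¬ ∃ v : E3, Z = {({v} : Finset E3)}) ∧
  (¬ ∃ u v : E3, u ≠ v ∧ Z = {({u} : Finset E3), ({v} : Finset E3), ({u, v} : Finset E3)})

/-- `T` is an infinite, maximal right-angled suspension in `L`: it is an
RA-suspension of a full subcomplex which is neither a vertex nor an edge, and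
`T` is not properly contained in another RA-suspension. -/
def IsInfMaxRASusp (T : Set (Finset E3)) : Prop :=
  (∃ Z t t', IsRASuspData L m T Z t t' ∧ InfiniteBase Z ∧ IsFullSubcomplex L Z) ∧
  ∀ T', IsRASusp L m T' → T ⊆ T' → T = T'

/-- `v 0, v 1, v 2, v 3` (in cyclic order) form a Euclidean 4-circuit of `L`:
all four edge labels are `2` and the circuit is not the boundary of the union
of two 2-simplices of `L` sharing an edge. -/
def IsEuclidean4Circuit (v : Fin 4 → E3) : Prop :=
  Function.Injective v ∧
  (∀ i : Fin 4, ({v i, v (i + 1)} : Finset E3) ∈ L.faces) ∧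
  (∀ i : Fin 4, m (v i) (v (i + 1)) = 2) ∧
  ¬ ((({v 0, v 1, v 2} : Finset E3) ∈ L.faces ∧ ({v 0, v 2, v 3} : Finset E3) ∈ L.faces) ∨
     (({v 1, v 2, v 3} : Finset E3) ∈ L.faces ∧ ({v 0, v 1, v 3} : Finset E3) ∈ L.faces))

/-- The subcomplex consisting of the vertices and edges of the 4-circuit `v`. -/
def circuitComplex (v : Fin 4 → E3) : Set (Finset E3) :=
  {F | (∃ i : Fin 4, F = {v i}) ∨ (∃ i : Fin 4, F = {v i, v (i + 1)})}

/-- `T` is the right-angled cone on a Euclidean 4-circuit: the closed star of a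
vertex `c` of valence four whose link is a Euclidean 4-circuit, all four edges
containing `c` being labeled `2`. -/
def IsRAConeOn4Circuit (T : Set (Finset E3)) : Prop :=
  ∃ (c : E3) (v : Fin 4 → E3), IsEuclidean4Circuit L m v ∧
    linkVerts L c = {v 0, v 1, v 2, v 3} ∧
    (∀ i : Fin 4, ({c, v i, v (i + 1)} : Finset E3) ∈ L.faces) ∧
    (∀ i : Fin 4, m c (v i) = 2) ∧
    T = star L c

/-- The generating relation for Seifert subcomplexes: two infinite, maximal
RA-suspensions whose intersection is a Euclidean 4-circuit. -/
def SeifertRel (S S' : Set (Finset E3)) : Prop :=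
  IsInfMaxRASusp L m S ∧ IsInfMaxRASusp L m S' ∧
  ∃ v : Fin 4 → E3, IsEuclidean4Circuit L m v ∧ S ∩ S' = circuitComplex v

/-- `D` is a Seifert subcomplex of `L`: the union of the members of an
equivalence class of infinite, maximal RA-suspensions under the equivalence
relation generated by `SeifertRel`. -/
def IsSeifertSubcomplex (D : Set (Finset E3)) : Prop :=
  ∃ S₀, IsInfMaxRASusp L m S₀ ∧
    D = ⋃₀ {S | IsInfMaxRASusp L m S ∧ Relation.EqvGen (SeifertRel L m) S₀ S}

end CoxOrb

/-!
A graph `K₃,₃` cannot be drawn in a planar space: after deleting a point off the drawing it lies in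
`ℂ`, and comparing logarithms of `γ s - δ t` around the unit square, for every pair of
disjoint edges `γ`, `δ`, gives a system of equations between winding numbers that has no solution
modulo 2. In a planar complex this bounds the number of 2-simplices on an edge by two, and excludes
a certain subdivision of `K₃,₃` around a 2-simplex.

By the metric flag condition, two vertices not joined by an edge span, together with all their
common neighbours along edges labeled 2, a right-angled suspension. So an infinite, maximal
suspension containing a 2-simplex is of this form, and its poles determine it. Let two of them
share a 2-simplex, with poles `t, t'` and `r, r'`. If `t = r` is a vertex of the 2-simplex, then
`t`, `t'` and `r'` complete its opposite edge to 2-simplices, so `t' = r'`. Otherwise the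
2-simplex is `{t, r, b}`, and planarity leaves at most one further common neighbour `d` besides
`r, b, r'` and `t, b, t'`; both suspensions then lie in the one with poles `r, r'` or `t, t'` or
`b, d`, and agree by maximality. Hence equivalence classes whose unions share a 2-simplex share a
suspension.
-/

namespace CoxOrb

open Set Function

/-! ### Increments of logarithms -/

theorem exists_continuous_log {X : Type*} [TopologicalSpace X] [LocallyPathConnectedSpace X]
    [SimplyConnectedSpace X] {f : X → ℂ} (hf : Continuous f) (h0 : ∀ x, f x ≠ 0) :
    ∃ l : X → ℂ, Continuous l ∧ ∀ x, Complex.exp (l x) = f x := by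
  obtain ⟨l, hl, hexp⟩ := Complex.exists_continuousOn_eqOn_exp_comp (U := univ) (X := X)
    (Homeomorph.Set.univ X).toHomotopyEquiv.simplyConnectedSpace isOpen_univ hf.continuousOn
    (by simpa using h0)
  exact ⟨l, continuousOn_univ.1 hl, fun x ↦ hexp (mem_univ x)⟩

open Classical in
/-- The increment over `[0, 1]` of a continuous logarithm of `f`. It does not depend on the
logarithm, and is `0` by convention if `f` has none. -/
noncomputable def logIncrement (f : ℝ → ℂ) : ℂ :=
  if h : ∃ l : ℝ → ℂ, Continuous l ∧ ∀ x, Complex.exp (l x) = f x then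
    h.choose 1 - h.choose 0 else 0

theorem logIncrement_eq {f l : ℝ → ℂ} (hl : Continuous l) (h : ∀ x, Complex.exp (l x) = f x) :
    logIncrement f = l 1 - l 0 := by
  have hex : ∃ l : ℝ → ℂ, Continuous l ∧ ∀ x, Complex.exp (l x) = f x := ⟨l, hl, h⟩
  obtain ⟨hl', h'⟩ := hex.choose_spec
  have hconst := Complex.isCoveringMap_exp.const_of_comp (hl'.sub hl)
    (fun x y ↦ Subtype.ext (by simp only [Pi.sub_apply, Complex.exp_sub, h, h', div_self,
      (h _ ▸ Complex.exp_ne_zero _ : f _ ≠ 0), ne_eq, not_false_eq_true])) 1 0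
  rw [logIncrement, dif_pos hex, sub_eq_sub_iff_sub_eq_sub]
  exact hconst

theorem logIncrement_neg {f : ℝ → ℂ} (hf : Continuous f) (h0 : ∀ x, f x ≠ 0) :
    logIncrement (fun x ↦ -f x) = logIncrement f := by
  obtain ⟨l, hl, hexp⟩ := exists_continuous_log hf h0
  rw [logIncrement_eq hl hexp, logIncrement_eq (l := fun x ↦ l x + Real.pi * Complex.I)
    (by fun_prop) fun x ↦ by simp [Complex.exp_add, hexp, Complex.exp_pi_mul_I]]
  ring

theorem exists_int_logIncrement_eq {f : ℝ → ℂ} (hf : Continuous f) (h0 : ∀ x, f x ≠ 0) {z w : ℂ}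
    (hz : Complex.exp z = f 0) (hw : Complex.exp w = f 1) :
    ∃ n : ℤ, logIncrement f = w - z + n * (2 * Real.pi * Complex.I) := by
  obtain ⟨l, hl, hexp⟩ := exists_continuous_log hf h0
  obtain ⟨p, hp⟩ := Complex.exp_eq_exp_iff_exists_int.1 ((hexp 0).trans hz.symm)
  obtain ⟨q, hq⟩ := Complex.exp_eq_exp_iff_exists_int.1 ((hexp 1).trans hw.symm)
  refine ⟨q - p, ?_⟩
  rw [logIncrement_eq hl hexp, hp, hq]
  push_cast
  ring

/-- Both sides are the increment of a logarithm of `γ s - δ t` from `(0, 0)` to `(1, 1)`, along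
the two ways around the unit square. -/
theorem logIncrement_sub_const_add {γ δ : ℝ → ℂ} (hγ : Continuous γ) (hδ : Continuous δ)
    (hd : ∀ s t, γ s ≠ δ t) :
    logIncrement (fun s ↦ γ s - δ 0) + logIncrement (fun t ↦ δ t - γ 1) =
      logIncrement (fun t ↦ δ t - γ 0) + logIncrement (fun s ↦ γ s - δ 1) := by
  obtain ⟨H, hH, hexp⟩ := exists_continuous_log (f := fun x : ℝ × ℝ ↦ γ x.1 - δ x.2)
    (by fun_prop) fun x ↦ sub_ne_zero.2 (hd _ _)
  have hrow (t : ℝ) : logIncrement (fun s ↦ γ s - δ t) = H (1, t) - H (0, t) :=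
    logIncrement_eq (l := fun s ↦ H (s, t)) (by fun_prop) fun s ↦ hexp (s, t)
  have hcol (s : ℝ) : logIncrement (fun t ↦ δ t - γ s) = H (s, 1) - H (s, 0) := by
    rw [← logIncrement_neg (by fun_prop) fun t ↦ sub_ne_zero.2 (hd s t).symm]
    simp only [neg_sub]
    exact logIncrement_eq (l := fun t ↦ H (s, t)) (by fun_prop) fun t ↦ hexp (s, t)
  rw [hrow, hrow, hcol, hcol]
  ring

/-! ### Nonplanarity of `K₃,₃` -/

theorem exists_log_sub {ι : Type*} [LinearOrder ι] {c : ι → ℂ} (hc : Injective c) :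
    ∃ θ : ι → ι → ℂ, (∀ a b, a ≠ b → Complex.exp (θ a b) = c a - c b) ∧
      ∀ a b, a < b → θ b a = θ a b + Real.pi * Complex.I := by
  refine ⟨fun a b ↦ if a < b then Complex.log (c a - c b) else
    Complex.log (c b - c a) + Real.pi * Complex.I, fun a b hab ↦ ?_, fun a b hab ↦ ?_⟩
  · have hexp (a b : ι) (h : a ≠ b) : Complex.exp (Complex.log (c a - c b)) = c a - c b :=
      Complex.exp_log (sub_ne_zero.2 (hc.ne h))
    beta_reduce
    split_ifs
    · exact hexp a b hab
    · rw [Complex.exp_add, hexp b a hab.symm, Complex.exp_pi_mul_I]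
      ring
  · simp [hab, hab.not_gt]

/-- Modulo `2` each unknown occurs twice in the sum of the `18` equations, while the constants add
up to `9`. -/
theorem not_k33_crossing_equations (M N : Fin 3 → Fin 3 → Fin 3 → ℤ) :
    ¬ ∀ i j k l, i < k → j ≠ l →
      M k i j + N j k l + (if j < l then 1 else 0) = M i k l + N l i j := by
  intro h
  have hrow (i k : Fin 3) (hik : i < k) :=
    And.intro (And.intro (h i 0 k 1 hik (by decide)) (h i 1 k 0 hik (by decide)))
      (And.intro (And.intro (h i 0 k 2 hik (by decide)) (h i 2 k 0 hik (by decide)))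
        (And.intro (h i 1 k 2 hik (by decide)) (h i 2 k 1 hik (by decide))))
  have h01 := hrow 0 1 (by decide)
  have h02 := hrow 0 2 (by decide)
  have h12 := hrow 1 2 (by decide)
  simp only [Fin.isValue, zero_lt_one, ↓reduceIte, not_lt_zero, add_zero, Fin.reduceLT,
    Fin.lt_one_iff, Nat.reduceAdd, Fin.reduceEq] at h01 h02 h12
  omega

/-- A drawing of the complete bipartite graph `K₃,₃` in a space `X`: the edge joining `P i` to `Q j`
is the arc `γ i j` over `[0, 1]`, and edges without a common endpoint do not meet. Arcs are
parametrized by all of `ℝ`, so that their logarithms live on a simply connected space without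
boundary; adjacent edges may meet. -/
structure IsK33Drawing {X : Type*} [TopologicalSpace X] (P Q : Fin 3 → X)
    (γ : Fin 3 → Fin 3 → ℝ → X) : Prop where
  continuous : ∀ i j, Continuous (γ i j)
  map_zero : ∀ i j, γ i j 0 = P i
  map_one : ∀ i j, γ i j 1 = Q j
  ne : ∀ i j k l, i ≠ k → j ≠ l → ∀ s t, γ i j s ≠ γ k l t

/-- The vertices of a drawing of `K₃,₃`, ordered as `P 0, P 1, P 2, Q 0, Q 1, Q 2`. -/
def k33Vertex {X : Type*} (P Q : Fin 3 → X) (a : Fin 3 ⊕ₗ Fin 3) : X :=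
  Sum.elim P Q (ofLex a)

namespace IsK33Drawing

section

variable {X : Type*} [TopologicalSpace X] {P Q : Fin 3 → X} {γ : Fin 3 → Fin 3 → ℝ → X}
  (h : IsK33Drawing P Q γ)

include h

theorem ne_left {i k : Fin 3} (hik : k ≠ i) (l : Fin 3) (s : ℝ) : γ k l s ≠ P i := by
  obtain ⟨j, hj⟩ := exists_ne l
  exact h.map_zero i j ▸ h.ne k l i j hik hj.symm s 0

theorem ne_right {j l : Fin 3} (hjl : l ≠ j) (k : Fin 3) (s : ℝ) : γ k l s ≠ Q j := by
  obtain ⟨i, hi⟩ := exists_ne k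
  exact h.map_one i j ▸ h.ne k l i j hi.symm hjl s 1

theorem left_ne_right (i j : Fin 3) : P i ≠ Q j := by
  obtain ⟨l, hl⟩ := exists_ne j
  exact h.map_zero i l ▸ h.ne_right hl i 0

theorem injective_vertex : Injective (k33Vertex P Q) := by
  refine (Injective.sumElim (fun i k hik ↦ ?_) (fun j l hjl ↦ ?_) h.left_ne_right).comp
    ofLex.injective
  · by_contra hne
    exact h.ne_left hne 0 0 (by rw [h.map_zero, hik])
  · by_contra hne
    exact h.ne_right hne 0 1 (by rw [h.map_one, hjl])

end

variable {P Q : Fin 3 → ℂ} {γ : Fin 3 → Fin 3 → ℝ → ℂ}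

theorem exists_winding (h : IsK33Drawing P Q γ) {θ : Fin 3 ⊕ₗ Fin 3 → Fin 3 ⊕ₗ Fin 3 → ℂ}
    (hθ : ∀ a b, a ≠ b → Complex.exp (θ a b) = k33Vertex P Q a - k33Vertex P Q b) :
    ∃ n : Fin 3 ⊕ₗ Fin 3 → Fin 3 → Fin 3 → ℤ, ∀ a k l, (∀ s, γ k l s ≠ k33Vertex P Q a) →
      logIncrement (fun s ↦ γ k l s - k33Vertex P Q a) =
        θ (Sum.inrₗ l) a - θ (Sum.inlₗ k) a + n a k l * (2 * Real.pi * Complex.I) := by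
  have hwind (a k l) : ∃ n : ℤ, (∀ s, γ k l s ≠ k33Vertex P Q a) →
      logIncrement (fun s ↦ γ k l s - k33Vertex P Q a) =
        θ (Sum.inrₗ l) a - θ (Sum.inlₗ k) a + n * (2 * Real.pi * Complex.I) := by
    by_cases ha : ∀ s, γ k l s ≠ k33Vertex P Q a
    · have hk : Sum.inlₗ k ≠ a := by rintro rfl; exact ha 0 (h.map_zero k l)
      have hl : Sum.inrₗ l ≠ a := by rintro rfl; exact ha 1 (h.map_one k l)
      obtain ⟨n, hn⟩ := exists_int_logIncrement_eq ((h.continuous k l).sub continuous_const)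
        (fun s ↦ sub_ne_zero.2 (ha s)) (by rw [Pi.sub_apply, h.map_zero]; exact hθ _ a hk)
        (by rw [Pi.sub_apply, h.map_one]; exact hθ _ a hl)
      exact ⟨n, fun _ ↦ hn⟩
    · exact ⟨0, fun h ↦ (ha h).elim⟩
  choose n hn using hwind
  exact ⟨n, hn⟩

theorem not_complex : ¬ IsK33Drawing P Q γ := by
  intro h
  obtain ⟨θ, hexp, hθ⟩ := exists_log_sub h.injective_vertex
  obtain ⟨n, hn⟩ := h.exists_winding hexp
  refine not_k33_crossing_equations (fun i ↦ n (Sum.inlₗ i)) (fun j ↦ n (Sum.inrₗ j))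
    fun i j k l hik hjl ↦ ?_
  have heq := logIncrement_sub_const_add (h.continuous i j) (h.continuous k l)
    (h.ne i j k l hik.ne hjl)
  rw [h.map_zero, h.map_one, h.map_zero, h.map_one] at heq
  have hPi := hn (Sum.inlₗ i) k l (h.ne_left hik.ne' l)
  have hPk := hn (Sum.inlₗ k) i j (h.ne_left hik.ne j)
  have hQj := hn (Sum.inrₗ j) k l (h.ne_right hjl.symm k)
  have hQl := hn (Sum.inrₗ l) i j (h.ne_right hjl i)
  have hPP := hθ (Sum.inlₗ i) (Sum.inlₗ k) (Sum.Lex.inl_lt_inl_iff.2 hik)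
  have hPQ (i j) := hθ (Sum.inlₗ i) (Sum.inrₗ j) (Sum.Lex.inl_lt_inr i j)
  simp only [k33Vertex, Sum.inlₗ, Sum.inrₗ, ofLex_toLex, Sum.elim_inl, Sum.elim_inr]
    at hPi hPk hQj hQl hPP hPQ
  rw [hPk, hPi, hQl, hQj, hPQ, hPQ, hPP] at heq
  refine Int.cast_injective (mul_right_cancel₀ Complex.two_pi_I_ne_zero ?_)
  rcases hjl.lt_or_gt with hlt | hlt
  · have hQQ := hθ (Sum.inrₗ j) (Sum.inrₗ l) (Sum.Lex.inr_lt_inr_iff.2 hlt)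
    push_cast [if_pos hlt]
    linear_combination heq - hQQ
  · have hQQ := hθ (Sum.inrₗ l) (Sum.inrₗ j) (Sum.Lex.inr_lt_inr_iff.2 hlt)
    push_cast [if_neg hlt.not_gt]
    linear_combination heq + hQQ

end IsK33Drawing

theorem not_k33_of_continuousOn_injOn {X : Type*} [TopologicalSpace X] {K : Set X} {g : X → ℂ}
    (hg : ContinuousOn g K) (hinj : InjOn g K) {P Q : Fin 3 → X} {A : Fin 3 → Fin 3 → Set X}
    (hA : ∀ i j, JoinedIn (A i j) (P i) (Q j)) (hAK : ∀ i j, A i j ⊆ K)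
    (hd : ∀ i j k l, i < k → j ≠ l → Disjoint (A i j) (A k l)) : False := by
  have hd' (i j k l) (hik : i ≠ k) (hjl : j ≠ l) : Disjoint (A i j) (A k l) := by
    rcases hik.lt_or_gt with h | h
    exacts [hd i j k l h hjl, (hd k l i j h hjl.symm).symm]
  have hgA (i j) : JoinedIn (g '' A i j) (g (P i)) (g (Q j)) :=
    (hA i j).map_continuousOn (hg.mono (hAK i j))
  have hmem (i j s) : (hgA i j).somePath.extend s ∈ g '' A i j := (hgA i j).somePath_mem _
  refine IsK33Drawing.not_complex (P := g ∘ P) (Q := g ∘ Q)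
    (γ := fun i j ↦ (hgA i j).somePath.extend)
    ⟨fun i j ↦ (hgA i j).somePath.continuous_extend, fun i j ↦ Path.extend_zero _,
      fun i j ↦ Path.extend_one _, fun i j k l hik hjl s t hst ↦ ?_⟩
  have hdisj : Disjoint (g '' A i j) (g '' A k l) :=
    (hd' i j k l hik hjl).image hinj (hAK i j) (hAK k l)
  exact hdisj.ne_of_mem (hmem i j s) (hmem k l t) hst

/-! ### Subsets of the sphere -/

theorem exists_continuousOn_injOn_of_sphere {V X : Type*} [NormedAddCommGroup V]
    [InnerProductSpace ℝ V] [Fact (Module.finrank ℝ V = 2 + 1)] [TopologicalSpace X] {K : Set X}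
    {f : K → Metric.sphere (0 : V) 1} (hf : Continuous f) (hinj : Injective f) {p : X}
    (hp : p ∈ K) : ∃ g : X → ℂ, ContinuousOn g (K \ {p}) ∧ InjOn g (K \ {p}) := by
  classical
  let σ := stereographic' 2 (f ⟨p, hp⟩)
  have hσ (x : X) (hx : x ∈ K \ {p}) : f ⟨x, hx.1⟩ ∈ σ.source := by
    rw [stereographic'_source]
    exact fun h ↦ hx.2 (congrArg Subtype.val (hinj h))
  let φ := Complex.orthonormalBasisOneI.repr.symm
  refine ⟨fun x ↦ if hx : x ∈ K then φ (σ (f ⟨x, hx⟩)) else 0, ?_, fun x hx y hy hxy ↦ ?_⟩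
  · rw [continuousOn_iff_continuous_domRestrict]
    have hcont : Continuous fun x : ↥(K \ {p}) ↦ φ (σ (f ⟨x, x.2.1⟩)) :=
      φ.continuous.comp (σ.continuousOn.comp_continuous (by fun_prop) fun x ↦ hσ x x.2)
    exact hcont.congr fun x ↦ by simp only [domRestrict_apply, dif_pos x.2.1]
  · simp only [hx.1, hy.1, dif_pos] at hxy
    exact congrArg Subtype.val (hinj (σ.injOn (hσ x hx) (hσ y hy) (φ.injective hxy)))

/-- `K` is planar in the weak sense that it has a continuous injection into the unit sphere, not
necessarily an embedding. -/
def InjectsIntoSphere {X : Type*} [TopologicalSpace X] (K : Set X) : Prop :=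
  ∃ f : K → Metric.sphere (0 : E3) 1, Continuous f ∧ Injective f

theorem InjectsIntoSphere.not_k33 {X : Type*} [TopologicalSpace X] {K : Set X}
    (hK : InjectsIntoSphere K) {P Q : Fin 3 → X} {A : Fin 3 → Fin 3 → Set X}
    (hA : ∀ i j, JoinedIn (A i j) (P i) (Q j)) (hAK : ∀ i j, A i j ⊆ K)
    (hd : ∀ i j k l, i < k → j ≠ l → Disjoint (A i j) (A k l))
    {p : X} (hp : p ∈ K) (hpA : ∀ i j, p ∉ A i j) : False := by
  obtain ⟨f, hf, hinj⟩ := hK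
  have : Fact (Module.finrank ℝ E3 = 2 + 1) := ⟨by simp⟩
  obtain ⟨g, hg, hginj⟩ := exists_continuousOn_injOn_of_sphere hf hinj hp
  exact not_k33_of_continuousOn_injOn hg hginj hA
    (fun i j ↦ subset_sdiff_singleton (hAK i j) (hpA i j)) hd

/-! ### Full subcomplexes -/

theorem isExtreme_convexHull_of_subset {𝕜 E : Type*} [Field 𝕜] [LinearOrder 𝕜]
    [IsStrictOrderedRing 𝕜] [AddCommGroup E] [Module 𝕜 E] {s t : Finset E}
    (hs : AffineIndependent 𝕜 ((↑) : s → E)) (hts : t ⊆ s) :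
    IsExtreme 𝕜 (convexHull 𝕜 (s : Set E)) (convexHull 𝕜 (t : Set E)) := by
  classical
  refine ⟨convexHull_mono (mod_cast hts), fun x hx y hy z hz ⟨α, β, hα, hβ, hαβ, hxy⟩ ↦ ?_⟩
  obtain ⟨u, hu0, hu1, hux⟩ := Finset.mem_convexHull'.1 hx
  obtain ⟨v, hv0, hv1, hvy⟩ := Finset.mem_convexHull'.1 hy
  obtain ⟨w, -, hw1, hwz⟩ := Finset.mem_convexHull'.1 hz
  let d (e : E) : 𝕜 := α * u e + β * v e - if e ∈ t then w e else 0
  have hd1 : ∑ e ∈ s, d e = 0 := by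
    simp [d, Finset.sum_sub_distrib, Finset.sum_add_distrib, ← Finset.mul_sum, hu1, hv1, hαβ,
      Finset.inter_eq_right.2 hts, hw1]
  have hdx : ∑ e ∈ s, d e • e = 0 := by
    simp only [d, sub_smul, add_smul, mul_smul, ite_smul, zero_smul, Finset.sum_sub_distrib,
      Finset.sum_add_distrib, ← Finset.smul_sum, hux, hvy, hxy, Finset.sum_ite_mem,
      Finset.inter_eq_right.2 hts, hwz, sub_self]
  have hd (e) (he : e ∈ s) : d e = 0 := hs.eq_zero_of_sum_eq_zero_subtype hd1 hdx e he
  have hu (e) (he : e ∈ s) (het : e ∉ t) : u e = 0 := by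
    have hsum : α * u e + β * v e = 0 := by simpa [d, het] using hd e he
    have hzero := (add_eq_zero_iff_of_nonneg (mul_nonneg hα.le (hu0 e he))
      (mul_nonneg hβ.le (hv0 e he))).1 hsum
    exact (mul_eq_zero.1 hzero.1).resolve_left hα.ne'
  rw [Finset.mem_convexHull']
  exact ⟨u, fun e he ↦ hu0 e (hts he),
    by rw [← hu1]; exact Finset.sum_subset hts hu,
    by rw [← hux]; exact Finset.sum_subset hts fun e he het ↦ by rw [hu e he het, zero_smul]⟩

section FullSubcomplex

variable {E : Type*} [AddCommGroup E] [Module ℝ E]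

/-- The full subcomplex of `L` spanned by the vertices in `W`. -/
def fullSubcomplex (L : SimplicialComplex ℝ E) (W : Set E) : Set (Finset E) :=
  {F | F ∈ L.faces ∧ (F : Set E) ⊆ W}

/-- The underlying space of the full subcomplex of `L` spanned by the vertices in `W`. -/
def fullSpace (L : SimplicialComplex ℝ E) (W : Set E) : Set E :=
  ⋃ F ∈ fullSubcomplex L W, convexHull ℝ (F : Set E)

variable {L : SimplicialComplex ℝ E} {W W' : Set E} {T : Finset E} {a b v x y : E}

theorem fullSubcomplex_mono (h : W ⊆ W') : fullSubcomplex L W ⊆ fullSubcomplex L W' :=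
  fun _ hF ↦ ⟨hF.1, hF.2.trans h⟩

theorem mem_fullSpace : x ∈ fullSpace L W ↔
    ∃ F ∈ L.faces, (F : Set E) ⊆ W ∧ x ∈ convexHull ℝ (F : Set E) := by
  simp only [fullSpace, fullSubcomplex, mem_iUnion, mem_ofPred_eq, exists_prop, and_assoc]

theorem fullSpace_subset_space : fullSpace L W ⊆ L.space := fun x hx ↦ by
  obtain ⟨F, hF, -, hxF⟩ := mem_fullSpace.1 hx
  exact L.convexHull_subset_space hF hxF

theorem convexHull_subset_fullSpace (hT : T ∈ L.faces) (hTW : (T : Set E) ⊆ W) :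
    convexHull ℝ (T : Set E) ⊆ fullSpace L W :=
  fun _ hx ↦ mem_fullSpace.2 ⟨T, hT, hTW, hx⟩

theorem disjoint_fullSpace (h : Disjoint W W') : Disjoint (fullSpace L W) (fullSpace L W') := by
  rw [Set.disjoint_left]
  intro x hx hx'
  obtain ⟨F, hF, hFW, hxF⟩ := mem_fullSpace.1 hx
  obtain ⟨G, hG, hGW, hxG⟩ := mem_fullSpace.1 hx'
  have hxFG := (L.convexHull_inter_convexHull hF hG).subset ⟨hxF, hxG⟩
  rw [(h.mono hFW hGW).inter_eq, convexHull_empty] at hxFG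
  exact hxFG

theorem convexHull_inter_fullSpace (hT : T ∈ L.faces) :
    convexHull ℝ (T : Set E) ∩ fullSpace L W = convexHull ℝ (T ∩ W) := by
  classical
  refine Subset.antisymm (fun x ⟨hxT, hx⟩ ↦ ?_)
    fun x hx ↦ ⟨convexHull_mono inter_subset_left hx, ?_⟩
  · obtain ⟨F, hF, hFW, hxF⟩ := mem_fullSpace.1 hx
    exact convexHull_mono (inter_subset_inter_right _ hFW)
      ((L.convexHull_inter_convexHull hT hF).subset ⟨hxT, hxF⟩)
  · have hcoe : ((T.filter (· ∈ W) : Finset E) : Set E) = ↑T ∩ W := by ext; simp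
    have hne : (T.filter (· ∈ W)).Nonempty := by
      rw [← Finset.coe_nonempty, hcoe, ← convexHull_nonempty_iff (𝕜 := ℝ)]
      exact ⟨x, hx⟩
    exact convexHull_subset_fullSpace (L.down_closed hT (Finset.filter_subset _ _) hne)
      (hcoe.trans_subset inter_subset_right) (hcoe ▸ hx)

theorem vertex_mem_fullSpace_iff (hv : {v} ∈ L.faces) : v ∈ fullSpace L W ↔ v ∈ W := by
  have h := convexHull_inter_fullSpace (W := W) hv
  by_cases hvW : v ∈ W <;> simp_all [Set.ext_iff]

theorem isExtreme_fullSpace (hT : T ∈ L.faces) :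
    IsExtreme ℝ (convexHull ℝ (T : Set E)) (convexHull ℝ (T : Set E) ∩ fullSpace L W) := by
  classical
  have hcoe : ((T.filter (· ∈ W) : Finset E) : Set E) = ↑T ∩ W := by ext; simp
  rw [convexHull_inter_fullSpace hT, ← hcoe]
  exact isExtreme_convexHull_of_subset (L.indep hT) (Finset.filter_subset _ _)

theorem segment_inter_fullSpace_subset (hT : T ∈ L.faces) (hx : x ∈ convexHull ℝ (T : Set E))
    (hy : y ∈ convexHull ℝ (T : Set E)) (hyW : y ∉ fullSpace L W) :
    segment ℝ x y ∩ fullSpace L W ⊆ {x} := by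
  rintro z ⟨hz, hzW⟩
  rw [← insert_endpoints_openSegment] at hz
  rcases hz with rfl | rfl | hz
  · rfl
  · exact (hyW hzW).elim
  · have hzT : z ∈ convexHull ℝ (T : Set E) :=
      (convex_convexHull ℝ _).openSegment_subset hx hy hz
    exact (hyW ((isExtreme_fullSpace hT).right_mem_of_mem_openSegment hx hy ⟨hzT, hzW⟩ hz).2).elim

theorem vertex_mem_faces (hT : T ∈ L.faces) (hv : v ∈ T) : {v} ∈ L.faces :=
  L.down_closed hT (Finset.singleton_subset_iff.2 hv) (Finset.singleton_nonempty v)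

variable [DecidableEq E]

theorem edge_mem_faces (hT : T ∈ L.faces) (ha : a ∈ T) (hb : b ∈ T) : {a, b} ∈ L.faces :=
  L.down_closed hT (Finset.insert_subset ha (Finset.singleton_subset_iff.2 hb))
    (Finset.insert_nonempty a {b})

theorem mem_of_openSegment_mem_fullSpace (hab : {a, b} ∈ L.faces) (hx : x ∈ openSegment ℝ a b)
    (hxW : x ∈ fullSpace L W) : a ∈ W ∧ b ∈ W := by
  have ha : a ∈ convexHull ℝ ((({a, b} : Finset E)) : Set E) := subset_convexHull ℝ _ (by simp)
  have hb : b ∈ convexHull ℝ ((({a, b} : Finset E)) : Set E) := subset_convexHull ℝ _ (by simp)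
  have hx' := (convex_convexHull ℝ _).openSegment_subset ha hb hx
  have hext := isExtreme_fullSpace (W := W) hab
  exact ⟨(vertex_mem_fullSpace_iff (vertex_mem_faces hab (by simp))).1
      (hext.left_mem_of_mem_openSegment ha hb ⟨hx', hxW⟩ hx).2,
    (vertex_mem_fullSpace_iff (vertex_mem_faces hab (by simp))).1
      (hext.right_mem_of_mem_openSegment ha hb ⟨hx', hxW⟩ hx).2⟩

theorem midpoint_notMem_segment_midpoint {t : E} (habt : {a, b, t} ∈ L.faces) (hab : a ≠ b)
    (hta : t ≠ a) (htb : t ≠ b) (hv : v ∈ ({a, b, t} : Finset E)) :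
    midpoint ℝ a b ∉ segment ℝ (midpoint ℝ b t) v := by
  intro hp
  have habL : {a, b} ∈ L.faces := edge_mem_faces habt (by simp) (by simp)
  have hbtL : {b, t} ∈ L.faces := edge_mem_faces habt (by simp) (by simp)
  have hvT : v ∈ convexHull ℝ (({a, b, t} : Finset E) : Set E) := subset_convexHull ℝ _ hv
  have hzT : midpoint ℝ b t ∈ convexHull ℝ (({a, b, t} : Finset E) : Set E) :=
    (convex_convexHull ℝ _).segment_subset (subset_convexHull ℝ _ (by simp))
      (subset_convexHull ℝ _ (by simp)) (midpoint_mem_segment b t)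
  have hzab : midpoint ℝ b t ∉ fullSpace L {a, b} := fun h ↦ by
    have := (mem_of_openSegment_mem_fullSpace hbtL (midpoint_mem_openSegment b t) h).2
    grind
  have hpab : midpoint ℝ a b ∈ fullSpace L {a, b} := by
    refine convexHull_subset_fullSpace habL (by simp) ?_
    rw [Finset.coe_pair, convexHull_pair]
    exact midpoint_mem_segment a b
  have hpv : midpoint ℝ a b = v :=
    segment_inter_fullSpace_subset habt hvT hzT hzab ⟨segment_symm ℝ _ v ▸ hp, hpab⟩
  have hvW : v ∈ fullSpace L {v} := (vertex_mem_fullSpace_iff (vertex_mem_faces habt hv)).2 rfl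
  obtain ⟨hav, hbv⟩ := mem_of_openSegment_mem_fullSpace habL
    (hpv ▸ midpoint_mem_openSegment a b) hvW
  exact hab (hav.trans hbv.symm)

theorem joinedIn_fullSpace_of_edge [TopologicalSpace E] [ContinuousAdd E] [ContinuousSMul ℝ E]
    (hab : {a, b} ∈ L.faces) (ha : a ∈ W) (hb : b ∈ W) : JoinedIn (fullSpace L W) a b := by
  refine JoinedIn.of_segment_subset ?_
  rw [← convexHull_pair, ← Finset.coe_pair]
  exact convexHull_subset_fullSpace hab (by simp [insert_subset_iff, ha, hb])

end FullSubcomplex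

/-! ### Configurations excluded by `K₃,₃` -/

section Configurations

variable {E : Type*} [AddCommGroup E] [Module ℝ E] [TopologicalSpace E] [ContinuousAdd E]
  [ContinuousSMul ℝ E] {L : SimplicialComplex ℝ E}

/-- The drawing of `K₃,₃` has `z` as third vertex on the side of `P`, joined to `Q j` by a segment
in the simplex `T j`. -/
theorem not_k33_fullSpace (hL : InjectsIntoSphere L.space) {z p : E} {P : Fin 2 → E}
    {Q : Fin 3 → E} {T : Fin 3 → Finset E} {W : Fin 2 → Fin 3 → Set E}
    (hT : ∀ j, T j ∈ L.faces) (hQT : ∀ j, Q j ∈ T j) (hzT : ∀ j, z ∈ convexHull ℝ (T j : Set E))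
    (hW : ∀ i j, JoinedIn (fullSpace L (W i j)) (P i) (Q j))
    (hd : ∀ j l, j ≠ l → Disjoint (W 0 j) (W 1 l))
    (hzW : ∀ i j, z ∉ fullSpace L (W i j)) (hp : p ∈ L.space)
    (hpz : ∀ j, p ∉ segment ℝ z (Q j)) (hpW : ∀ i j, p ∉ fullSpace L (W i j)) : False := by
  have hQW (i j) : Q j ∈ W i j :=
    (vertex_mem_fullSpace_iff (vertex_mem_faces (hT j) (hQT j))).1 (hW i j).target_mem
  have hQW' (i j l) (hjl : j ≠ l) : Q j ∉ W i l := by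
    fin_cases i
    exacts [fun h ↦ (hd l j hjl.symm).ne_of_mem h (hQW 1 j) rfl,
      fun h ↦ (hd j l hjl).ne_of_mem (hQW 0 j) h rfl]
  have hQ (j) : Q j ∈ convexHull ℝ (T j : Set E) := subset_convexHull ℝ _ (hQT j)
  have hdz (i j l) (hjl : j ≠ l) : Disjoint (segment ℝ z (Q j)) (fullSpace L (W i l)) := by
    rw [Set.disjoint_left]
    intro x hx hxW
    have hQl : Q j ∉ fullSpace L (W i l) := fun h ↦
      hQW' i j l hjl ((vertex_mem_fullSpace_iff (vertex_mem_faces (hT j) (hQT j))).1 h)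
    obtain rfl := segment_inter_fullSpace_subset (hT j) (hzT j) (hQ j) hQl ⟨hx, hxW⟩
    exact hzW i l hxW
  have hzQ (j) : segment ℝ z (Q j) ⊆ L.space :=
    ((convex_convexHull ℝ _).segment_subset (hzT j) (hQ j)).trans (L.convexHull_subset_space (hT j))
  refine hL.not_k33 (P := Fin.cons z P) (Q := Q)
    (A := Fin.cons (fun j ↦ segment ℝ z (Q j)) fun i j ↦ fullSpace L (W i j))
    (Fin.cases (fun j ↦ JoinedIn.of_segment_subset Subset.rfl) hW)
    (Fin.cases hzQ fun i j ↦ fullSpace_subset_space) (fun i j k l hik hjl ↦ ?_) hp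
    (Fin.cases hpz hpW)
  fin_cases i <;> fin_cases k <;> first
    | exact absurd hik (by decide) | exact hdz _ j l hjl | exact disjoint_fullSpace (hd j l hjl)

variable [DecidableEq E]

theorem not_three_triangles_on_edge (hL : InjectsIntoSphere L.space) {a b : E} (hab : a ≠ b)
    {t : Fin 3 → E} (ht : Injective t) (hta : ∀ j, t j ≠ a) (htb : ∀ j, t j ≠ b)
    (hT : ∀ j, {t j, a, b} ∈ L.faces) : False := by
  have habL : {a, b} ∈ L.faces := edge_mem_faces (hT 0) (by simp) (by simp)
  obtain ⟨z, hz, p, hp, hpz⟩ : ∃ z ∈ openSegment ℝ a b, ∃ p ∈ openSegment ℝ a b, p ≠ z :=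
    ⟨_, lineMap_mem_openSegment ℝ a b (t := 1 / 3) (by norm_num),
      _, lineMap_mem_openSegment ℝ a b (t := 2 / 3) (by norm_num),
      (AffineMap.lineMap_injective ℝ hab).ne (by norm_num)⟩
  have hhull (j) : convexHull ℝ (({a, b} : Finset E) : Set E) ⊆
      convexHull ℝ (({t j, a, b} : Finset E) : Set E) := convexHull_mono (by grind)
  have hseg : openSegment ℝ a b ⊆ convexHull ℝ (({a, b} : Finset E) : Set E) := by
    rw [Finset.coe_pair, convexHull_pair]
    exact openSegment_subset_segment ℝ a b
  have hpoint (q) (hq : q ∈ openSegment ℝ a b) (i : Fin 2) (j : Fin 3) :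
      q ∉ fullSpace L (![{a, t j}, {b, t j}] i) := fun h ↦ by
    have := mem_of_openSegment_mem_fullSpace habL hq h
    fin_cases i <;> simp_all [eq_comm]
  refine not_k33_fullSpace hL (z := z) (p := p) (P := ![a, b]) (Q := t)
    (W := fun i j ↦ ![{a, t j}, {b, t j}] i) hT (by simp) (fun j ↦ hhull j (hseg hz))
    (fun i j ↦ ?_) (fun j l hjl ↦ ?_) (hpoint z hz) (L.convexHull_subset_space habL (hseg hp))
    (fun j hpj ↦ ?_) (hpoint p hp)
  · fin_cases i <;> refine joinedIn_fullSpace_of_edge (edge_mem_faces (hT j) ?_ ?_) ?_ ?_ <;> simp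
  · have := ht.ne hjl
    simp only [Matrix.cons_val_zero, Matrix.cons_val_one, Set.disjoint_left]
    grind
  · have htj : t j ∉ fullSpace L {a, b} := by
      rw [vertex_mem_fullSpace_iff (vertex_mem_faces (hT j) (by simp))]
      simp [hta, htb]
    refine hpz (segment_inter_fullSpace_subset (hT j) (hhull j (hseg hz))
      (subset_convexHull ℝ _ (by simp)) htj ⟨hpj, ?_⟩)
    exact convexHull_subset_fullSpace habL (by simp) (hseg hp)

/-- With a point in the interior of the edge `b t` as third vertex on its side, the triangle
`a b t`, the edges and the two paths `r y a` and `t x r'` form a subdivision of `K₃,₃`. -/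
theorem not_subdivided_k33_on_triangle (hL : InjectsIntoSphere L.space) {a b t r r' x y : E}
    (hne : [a, b, t, r, r', x, y].Nodup) (habt : {a, b, t} ∈ L.faces)
    (hbr : {b, r} ∈ L.faces) (htr : {t, r} ∈ L.faces) (har' : {a, r'} ∈ L.faces)
    (hbr' : {b, r'} ∈ L.faces) (hay : {a, y} ∈ L.faces) (hyr : {y, r} ∈ L.faces)
    (htx : {t, x} ∈ L.faces) (hxr' : {x, r'} ∈ L.faces) : False := by
  let W : Fin 2 → Fin 3 → Set E := ![![{a, y, r}, {b, r}, {t, r}], ![{a, r'}, {b, r'}, {t, x, r'}]]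
  have hW (i j) : ∀ u ∈ ({a, b, t} : Finset E), ∀ v ∈ ({a, b, t} : Finset E), u ∈ W i j →
      v ∈ W i j → u = v := by
    fin_cases i <;> fin_cases j <;> simp [W] <;> grind
  have hWd (j l) (hjl : j ≠ l) : Disjoint (W 0 j) (W 1 l) := by
    fin_cases j <;> fin_cases l <;> simp [W] at hjl ⊢ <;> grind
  have hWj (i j) : JoinedIn (fullSpace L (W i j)) (![r, r'] i) (![a, b, t] j) := by
    fin_cases i <;> fin_cases j
    · exact ((joinedIn_fullSpace_of_edge hay (by simp [W]) (by simp [W])).trans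
        (joinedIn_fullSpace_of_edge hyr (by simp [W]) (by simp [W]))).symm
    · exact (joinedIn_fullSpace_of_edge hbr (by simp [W]) (by simp [W])).symm
    · exact (joinedIn_fullSpace_of_edge htr (by simp [W]) (by simp [W])).symm
    · exact (joinedIn_fullSpace_of_edge har' (by simp [W]) (by simp [W])).symm
    · exact (joinedIn_fullSpace_of_edge hbr' (by simp [W]) (by simp [W])).symm
    · exact ((joinedIn_fullSpace_of_edge htx (by simp [W]) (by simp [W])).trans
        (joinedIn_fullSpace_of_edge hxr' (by simp [W]) (by simp [W]))).symm
  have hmid (u v) (hu : u ∈ ({a, b, t} : Finset E)) (hv : v ∈ ({a, b, t} : Finset E))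
      (huv : u ≠ v) (i j) : midpoint ℝ u v ∉ fullSpace L (W i j) := fun h ↦
    have hmem := mem_of_openSegment_mem_fullSpace (edge_mem_faces habt hu hv)
      (midpoint_mem_openSegment u v) h
    huv (hW i j u hu v hv hmem.1 hmem.2)
  have hhull (u v) (hu : u ∈ ({a, b, t} : Finset E)) (hv : v ∈ ({a, b, t} : Finset E)) :
      midpoint ℝ u v ∈ convexHull ℝ (({a, b, t} : Finset E) : Set E) :=
    (convex_convexHull ℝ _).segment_subset (subset_convexHull ℝ _ hu) (subset_convexHull ℝ _ hv)
      (midpoint_mem_segment u v)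
  have hV (j) : ![a, b, t] j ∈ ({a, b, t} : Finset E) := by fin_cases j <;> simp
  simp only [List.nodup_cons, List.mem_cons, not_or] at hne
  refine not_k33_fullSpace hL (z := midpoint ℝ b t) (p := midpoint ℝ a b) (T := fun _ ↦ {a, b, t})
    (fun _ ↦ habt) hV (fun _ ↦ hhull b t (by simp) (by simp)) hWj hWd
    (hmid b t (by simp) (by simp) hne.2.1.1)
    (L.convexHull_subset_space habt (hhull a b (by simp) (by simp)))
    (fun j ↦ midpoint_notMem_segment_midpoint habt hne.1.1 (Ne.symm hne.1.2.1)
      (Ne.symm hne.2.1.1) (hV j))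
    (hmid a b (by simp) (by simp) hne.1.1)

end Configurations

/-! ### Right-angled suspensions -/

section RASuspensions

variable {L : SimplicialComplex ℝ E3} {m : E3 → E3 → ℕ}

theorem left_mem_commonNeighbors {V : Type*} {G : SimpleGraph V} {u v x y : V}
    (hx : x ∈ G.commonNeighbors u v) (hy : y ∈ G.commonNeighbors u v) :
    u ∈ G.commonNeighbors x y :=
  (G.mem_commonNeighbors).2 ⟨hx.1.symm, hy.1.symm⟩

theorem right_mem_commonNeighbors {V : Type*} {G : SimpleGraph V} {u v x y : V}
    (hx : x ∈ G.commonNeighbors u v) (hy : y ∈ G.commonNeighbors u v) :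
    v ∈ G.commonNeighbors x y :=
  (G.mem_commonNeighbors).2 ⟨hx.2.symm, hy.2.symm⟩

/-- The graph formed by the edges of `L` labeled `2`. Both orders of the ends are required to carry
the label, so that adjacency is symmetric for an arbitrary `m`. -/
def rightAngledGraph (L : SimplicialComplex ℝ E3) (m : E3 → E3 → ℕ) : SimpleGraph E3 where
  Adj u v := u ≠ v ∧ {u, v} ∈ L.faces ∧ m u v = 2 ∧ m v u = 2
  symm := ⟨fun u v ⟨hne, he, huv, hvu⟩ ↦ ⟨hne.symm, Finset.pair_comm u v ▸ he, hvu, huv⟩⟩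
  loopless := ⟨fun _ h ↦ h.1 rfl⟩

/-- The setting in which suspensions are studied below: a planar complex with symmetric labels
in which two right-angled edges at a vertex span a 2-simplex whenever their other ends are joined
by an edge, whatever its label. -/
structure IsPlanarRightAngledFlag (L : SimplicialComplex ℝ E3) (m : E3 → E3 → ℕ) : Prop where
  injects : InjectsIntoSphere L.space
  symm : ∀ s t, m s t = m t s
  flag : ∀ ⦃u x y⦄, (rightAngledGraph L m).Adj u x → (rightAngledGraph L m).Adj u y → x ≠ y →
    {x, y} ∈ L.faces → {u, x, y} ∈ L.faces

theorem IsLabeledS2.isPlanarRightAngledFlag (hL : IsLabeledS2 L m) (hflag : MetricFlag L m) :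
    IsPlanarRightAngledFlag L m where
  injects := hL.sphere.elim fun e ↦ ⟨e, e.continuous, e.injective⟩
  symm := hL.symm
  flag u x y hux huy hxy hxyL := by
    refine (hflag u x y hux.ne hxy huy.ne hux.2.1 hxyL huy.2.1).2 ?_
    have hm : (0 : ℝ) < 1 / m x y :=
      one_div_pos.2 (Nat.cast_pos.2 (zero_lt_two.trans_le (hL.two_le x y hxy hxyL)))
    rw [hux.2.2.1, huy.2.2.2]
    push_cast
    linarith

/-- The points `u`, `v` and their common neighbours along edges labeled `2`, which include all
vertices of a right-angled suspension with suspension points (poles) `u` and `v`. -/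
def suspVertices (L : SimplicialComplex ℝ E3) (m : E3 → E3 → ℕ) (u v : E3) : Set E3 :=
  {u, v} ∪ (rightAngledGraph L m).commonNeighbors u v

/-- The full subcomplex that contains every right-angled suspension with poles `u` and `v`. -/
def fullSusp (L : SimplicialComplex ℝ E3) (m : E3 → E3 → ℕ) (u v : E3) : Set (Finset E3) :=
  fullSubcomplex L (suspVertices L m u v)

theorem fullSusp_comm (u v : E3) : fullSusp L m u v = fullSusp L m v u := by
  rw [fullSusp, suspVertices, pair_comm, SimpleGraph.commonNeighbors_symm, fullSusp, suspVertices]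

theorem eq_singleton_or_erase_mem_of_mem_fullSusp {u v : E3} {F : Finset E3}
    (he : {u, v} ∉ L.faces) (hF : F ∈ fullSusp L m u v) (hu : u ∈ F) :
    F = {u} ∨ F.erase u ∈ fullSubcomplex L ((rightAngledGraph L m).commonNeighbors u v) := by
  have hv : v ∉ F := fun hv ↦ he (edge_mem_faces hF.1 hu hv)
  obtain h | h := (F.erase u).eq_empty_or_nonempty
  · exact .inl (by rw [← Finset.insert_erase hu, h]; rfl)
  · refine .inr ⟨L.down_closed hF.1 (Finset.erase_subset u F) h, fun y hy ↦ ?_⟩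
    have hy := Finset.mem_erase.1 hy
    exact (hF.2 hy.2).resolve_left (by rintro (rfl | rfl) <;> grind)

theorem IsRASuspData.symm {T Z : Set (Finset E3)} {t t' : E3} (h : IsRASuspData L m T Z t t') :
    IsRASuspData L m T Z t' t where
  __ := h
  tne := h.tne.symm
  t_notin := h.t'_notin
  t'_notin := h.t_notin
  labels v hv := (h.labels v hv).symm
  eq := by rw [h.eq, joinSusp, joinSusp, pair_comm, union_right_comm]

theorem IsRASuspData.mem_commonNeighbors {T Z : Set (Finset E3)} {t t' v : E3}
    (h : IsRASuspData L m T Z t t') (hm : ∀ s t, m s t = m t s) (hv : {v} ∈ Z) :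
    v ∈ (rightAngledGraph L m).commonNeighbors t t' := by
  have hlab := h.labels v hv
  refine ⟨⟨?_, h.subset ?_, hlab.1, hm t v ▸ hlab.1⟩, ⟨?_, h.subset ?_, hlab.2, hm t' v ▸ hlab.2⟩⟩
  · rintro rfl; exact h.t_notin _ hv (Finset.mem_singleton_self t)
  · rw [h.eq]; exact .inl (.inr ⟨_, hv, rfl⟩)
  · rintro rfl; exact h.t'_notin _ hv (Finset.mem_singleton_self t')
  · rw [h.eq]; exact .inr ⟨_, hv, rfl⟩

theorem IsRASuspData.coe_subset_commonNeighbors {T Z : Set (Finset E3)} {t t' : E3}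
    (h : IsRASuspData L m T Z t t') (hm : ∀ s t, m s t = m t s) {F : Finset E3} (hF : F ∈ Z) :
    (F : Set E3) ⊆ (rightAngledGraph L m).commonNeighbors t t' := fun v hv ↦
  h.mem_commonNeighbors hm (h.zdown F hF {v} (Finset.singleton_subset_iff.2 hv)
    (Finset.singleton_nonempty v))

theorem IsRASuspData.subset_fullSusp {T Z : Set (Finset E3)} {t t' : E3}
    (h : IsRASuspData L m T Z t t') (hm : ∀ s t, m s t = m t s) : T ⊆ fullSusp L m t t' := by
  refine fun F hF ↦ ⟨h.subset hF, ?_⟩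
  rw [h.eq] at hF
  have hZ {G} (hG : G ∈ Z) : (G : Set E3) ⊆ suspVertices L m t t' :=
    (h.coe_subset_commonNeighbors hm hG).trans subset_union_right
  have ht : t ∈ suspVertices L m t t' := by simp [suspVertices]
  have ht' : t' ∈ suspVertices L m t t' := by simp [suspVertices]
  obtain ((hF | rfl | rfl) | ⟨G, hG, rfl⟩) | ⟨G, hG, rfl⟩ := hF
  · exact hZ hF
  · simpa using ht
  · simpa using ht'
  · simpa using insert_subset ht (hZ hG)
  · simpa using insert_subset ht' (hZ hG)

theorem IsRASuspData.exists_vertex_base {T Z : Set (Finset E3)} {t t' a b : E3}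
    (h : IsRASuspData L m T Z t t') (hZ : InfiniteBase Z) (hab : a ≠ b) (habZ : {a, b} ∈ Z) :
    ∃ c, {c} ∈ Z ∧ c ≠ a ∧ c ≠ b := by
  by_contra! hc
  refine hZ.2 ⟨a, b, hab, Subset.antisymm (fun F hF ↦ ?_) ?_⟩
  · have hFab : (F : Set E3) ⊆ {a, b} := fun v hv ↦ or_iff_not_imp_left.2
      (hc v (h.zdown F hF {v} (by simpa using hv) (by simp)))
    have hne : (F : Set E3).Nonempty := L.nonempty_of_mem_faces (h.zsubset hF)
    simpa only [mem_insert_iff, mem_singleton_iff, ← Finset.coe_inj, Finset.coe_insert,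
      Finset.coe_singleton, hne.ne_empty, false_or] using Set.subset_pair_iff_eq.1 hFab
  · rintro F (rfl | rfl | rfl)
    · exact h.zdown _ habZ _ (by simp) (by simp)
    · exact h.zdown _ habZ _ (by simp) (by simp)
    · exact habZ

theorem injective_vecCons_three {α : Type*} {x y z : α} (hxy : x ≠ y) (hxz : x ≠ z)
    (hyz : y ≠ z) : Injective ![x, y, z] := by
  simp [← List.nodup_ofFn, hxy, hxz, hyz]

namespace IsPlanarRightAngledFlag

variable (hL : IsPlanarRightAngledFlag L m) {u v : E3} {F : Finset E3}
include hL

theorem not_three_commonNeighbors {a b x y z : E3} (hab : a ≠ b) (habL : {a, b} ∈ L.faces)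
    (hxy : x ≠ y) (hxz : x ≠ z) (hyz : y ≠ z)
    (hx : x ∈ (rightAngledGraph L m).commonNeighbors a b)
    (hy : y ∈ (rightAngledGraph L m).commonNeighbors a b)
    (hz : z ∈ (rightAngledGraph L m).commonNeighbors a b) : False := by
  have hN : ∀ j, (rightAngledGraph L m).Adj a (![x, y, z] j) ∧
      (rightAngledGraph L m).Adj b (![x, y, z] j) := by
    simp only [Fin.forall_fin_succ, IsEmpty.forall_iff, and_true]
    exact ⟨hx, hy, hz⟩
  refine not_three_triangles_on_edge hL.injects hab (t := ![x, y, z]) ?_ (fun j ↦ (hN j).1.ne')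
    (fun j ↦ (hN j).2.ne') fun j ↦ ?_
  · exact injective_vecCons_three hxy hxz hyz
  · exact hL.flag (hN j).1.symm (hN j).2.symm hab habL

theorem card_le_two_of_subset_commonNeighbors (huv : u ≠ v) (hF : F ∈ L.faces)
    (hFN : (F : Set E3) ⊆ (rightAngledGraph L m).commonNeighbors u v) : F.card ≤ 2 := by
  by_contra! hcard
  obtain ⟨x, hx, y, hy, z, hz, hxy, hxz, hyz⟩ := Finset.two_lt_card.1 hcard
  have hxyL := edge_mem_faces hF hx hy
  obtain ⟨hux, hvx⟩ := (SimpleGraph.mem_commonNeighbors _).1 (hFN hx)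
  obtain ⟨huy, hvy⟩ := (SimpleGraph.mem_commonNeighbors _).1 (hFN hy)
  obtain ⟨huz, hvz⟩ := (SimpleGraph.mem_commonNeighbors _).1 (hFN hz)
  have huxy := hL.flag hux huy hxy hxyL
  have hvxy := hL.flag hvx hvy hxy hxyL
  have hzxy : {z, x, y} ∈ L.faces :=
    L.down_closed hF (by simp [Finset.insert_subset_iff, hx, hy, hz]) (by simp)
  refine not_three_triangles_on_edge hL.injects hxy (t := ![u, v, z]) ?_ ?_ ?_ ?_
  · exact injective_vecCons_three huv huz.ne hvz.ne
  · simp [Fin.forall_fin_succ, hux.ne, hvx.ne, hxz.symm]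
  · simp [Fin.forall_fin_succ, huy.ne, hvy.ne, hyz.symm]
  · simp [Fin.forall_fin_succ, huxy, hvxy, hzxy]

theorem insert_mem_faces (huv : u ≠ v)
    (hF : F ∈ fullSubcomplex L ((rightAngledGraph L m).commonNeighbors u v)) :
    insert u F ∈ L.faces := by
  have hcard := hL.card_le_two_of_subset_commonNeighbors huv hF.1 hF.2
  have hpos := (L.nonempty_of_mem_faces hF.1).card_pos
  obtain h1 | h2 : F.card = 1 ∨ F.card = 2 := by omega
  · obtain ⟨x, rfl⟩ := Finset.card_eq_one.1 h1
    exact (hF.2 (by simp : x ∈ _)).1.2.1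
  · obtain ⟨x, y, hxy, rfl⟩ := Finset.card_eq_two.1 h2
    exact hL.flag (hF.2 (by simp : x ∈ _)).1 (hF.2 (by simp : y ∈ _)).1 hxy hF.1

theorem fullSusp_eq_joinSusp (huv : u ≠ v) (he : {u, v} ∉ L.faces)
    (hne : ((rightAngledGraph L m).commonNeighbors u v).Nonempty) :
    fullSusp L m u v =
      joinSusp (fullSubcomplex L ((rightAngledGraph L m).commonNeighbors u v)) u v := by
  obtain ⟨x, hux, hvx⟩ := hne
  have hu : u ∈ suspVertices L m u v := by simp [suspVertices]
  have hv : v ∈ suspVertices L m u v := by simp [suspVertices]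
  have hN : (rightAngledGraph L m).commonNeighbors u v ⊆ suspVertices L m u v := subset_union_right
  refine Subset.antisymm (fun F hF ↦ ?_) ?_
  · by_cases huF : u ∈ F
    · obtain rfl | hG := eq_singleton_or_erase_mem_of_mem_fullSusp he hF huF
      · exact .inl (.inl (.inr (.inl rfl)))
      · exact .inl (.inr ⟨_, hG, Finset.insert_erase huF⟩)
    by_cases hvF : v ∈ F
    · rw [Finset.pair_comm] at he
      rw [fullSusp_comm] at hF
      obtain rfl | hG := eq_singleton_or_erase_mem_of_mem_fullSusp he hF hvF
      · exact .inl (.inl (.inr (.inr rfl)))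
      · rw [SimpleGraph.commonNeighbors_symm] at hG
        exact .inr ⟨_, hG, Finset.insert_erase hvF⟩
    · refine .inl (.inl (.inl ⟨hF.1, fun y hy ↦ (hF.2 hy).resolve_left ?_⟩))
      rintro (rfl | rfl)
      exacts [huF hy, hvF hy]
  · rintro F (((hF | rfl | rfl) | ⟨G, hG, rfl⟩) | ⟨G, hG, rfl⟩)
    · exact fullSubcomplex_mono hN hF
    · exact ⟨vertex_mem_faces hux.2.1 (by simp), by simpa using hu⟩
    · exact ⟨vertex_mem_faces hvx.2.1 (by simp), by simpa using hv⟩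
    · exact ⟨hL.insert_mem_faces huv hG, by simpa using insert_subset hu (hG.2.trans hN)⟩
    · refine ⟨hL.insert_mem_faces huv.symm ?_, by simpa using insert_subset hv (hG.2.trans hN)⟩
      rwa [SimpleGraph.commonNeighbors_symm]

theorem isRASuspData_fullSusp (huv : u ≠ v) (he : {u, v} ∉ L.faces)
    (hne : ((rightAngledGraph L m).commonNeighbors u v).Nonempty) :
    IsRASuspData L m (fullSusp L m u v)
      (fullSubcomplex L ((rightAngledGraph L m).commonNeighbors u v)) u v where
  subset _ hF := hF.1
  zsubset _ hF := hF.1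
  zdown _ hF _ hGF hG := ⟨L.down_closed hF.1 hGF hG, (Finset.coe_subset.2 hGF).trans hF.2⟩
  znonempty := hne.elim fun x hx ↦ ⟨{x}, vertex_mem_faces hx.1.2.1 (by simp), by simpa using hx⟩
  tne := huv
  t_notin _ hF hu := SimpleGraph.notMem_commonNeighbors_left _ _ _ (hF.2 hu)
  t'_notin _ hF hv := SimpleGraph.notMem_commonNeighbors_right _ _ _ (hF.2 hv)
  labels x hx :=
    have hxN := hx.2 (Finset.mem_singleton_self x)
    ⟨hxN.1.2.2.1, hxN.2.2.2.1⟩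
  eq := hL.fullSusp_eq_joinSusp huv he hne

end IsPlanarRightAngledFlag

end RASuspensions

section MaxPoles

variable {L : SimplicialComplex ℝ E3} {m : E3 → E3 → ℕ}

/-- `t` and `t'` are the poles of an infinite, maximal right-angled suspension whose vertices are
`t`, `t'` and all their common right-angled neighbours. The base is infinite in the sense that it
has at least three vertices. -/
structure IsMaxPoles (L : SimplicialComplex ℝ E3) (m : E3 → E3 → ℕ) (t t' : E3) : Prop where
  ne : t ≠ t'
  not_edge : {t, t'} ∉ L.faces
  exists_third : ∀ a b, ∃ c ∈ (rightAngledGraph L m).commonNeighbors t t', c ≠ a ∧ c ≠ b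
  maximal : ∀ T, IsRASusp L m T → fullSusp L m t t' ⊆ T → fullSusp L m t t' = T

theorem IsMaxPoles.fullSusp_eq {t t' u v : E3} (h : IsMaxPoles L m t t')
    (hL : IsPlanarRightAngledFlag L m) (huv : u ≠ v) (he : {u, v} ∉ L.faces)
    (hsub : suspVertices L m t t' ⊆ suspVertices L m u v) :
    fullSusp L m t t' = fullSusp L m u v := by
  obtain ⟨c, hc, hcu, hcv⟩ := h.exists_third u v
  have hcN := (hsub (.inr hc)).resolve_left (by simp [hcu, hcv])
  exact h.maximal _ ⟨_, _, _, hL.isRASuspData_fullSusp huv he ⟨c, hcN⟩⟩ (fullSubcomplex_mono hsub)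

theorem IsRASuspData.isMaxPoles {T Z : Set (Finset E3)} {t t' a b : E3}
    (h : IsRASuspData L m T Z t t') (hL : IsPlanarRightAngledFlag L m) (hZ : InfiniteBase Z)
    (hmax : ∀ T', IsRASusp L m T' → T ⊆ T' → T = T') (hab : a ≠ b) (habZ : {a, b} ∈ Z) :
    IsMaxPoles L m t t' ∧ T = fullSusp L m t t' := by
  obtain ⟨c, hc, hca, hcb⟩ := h.exists_vertex_base hZ hab habZ
  have ha := h.coe_subset_commonNeighbors hL.symm habZ (by simp : a ∈ _)
  have hb := h.coe_subset_commonNeighbors hL.symm habZ (by simp : b ∈ _)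
  have hc := h.mem_commonNeighbors hL.symm hc
  have he : {t, t'} ∉ L.faces := fun he ↦
    hL.not_three_commonNeighbors h.tne he hab hca.symm hcb.symm ha hb hc
  have hT : T = fullSusp L m t t' :=
    hmax _ ⟨_, _, _, hL.isRASuspData_fullSusp h.tne he ⟨a, ha⟩⟩ (h.subset_fullSusp hL.symm)
  refine ⟨⟨h.tne, he, fun x y ↦ ?_, hT ▸ hmax⟩, hT⟩
  by_contra! hxy
  have := hxy a ha; have := hxy b hb; have := hxy c hc
  grind

theorem IsInfMaxRASusp.exists_isMaxPoles {S : Set (Finset E3)} {F : Finset E3}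
    (hS : IsInfMaxRASusp L m S) (hL : IsPlanarRightAngledFlag L m) (hF : F ∈ S)
    (hcard : F.card = 3) :
    ∃ t t', IsMaxPoles L m t t' ∧ S = fullSusp L m t t' ∧ t ∈ F ∧
      ∀ v ∈ F, v ≠ t → v ∈ (rightAngledGraph L m).commonNeighbors t t' := by
  obtain ⟨⟨Z, t, t', h, hZ, -⟩, hmax⟩ := hS
  obtain ⟨t, t', h, G, hG, rfl⟩ : ∃ t t', IsRASuspData L m S Z t t' ∧ ∃ G ∈ Z, insert t G = F := by
    obtain ((hFZ | rfl | rfl) | ⟨G, hG, rfl⟩) | ⟨G, hG, rfl⟩ := h.eq ▸ hF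
    · have := hL.card_le_two_of_subset_commonNeighbors h.tne (h.zsubset hFZ)
        (h.coe_subset_commonNeighbors hL.symm hFZ)
      omega
    · simp at hcard
    · simp at hcard
    · exact ⟨t, t', h, G, hG, rfl⟩
    · exact ⟨t', t, h.symm, G, hG, rfl⟩
  rw [Finset.card_insert_of_notMem (h.t_notin G hG), Nat.add_right_cancel_iff] at hcard
  obtain ⟨a, b, hab, rfl⟩ := Finset.card_eq_two.1 hcard
  obtain ⟨hp, hSt⟩ := h.isMaxPoles hL hZ hmax hab hG
  exact ⟨t, t', hp, hSt, Finset.mem_insert_self t _, fun v hv hvt ↦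
    h.coe_subset_commonNeighbors hL.symm hG (Finset.mem_of_mem_insert_of_ne hv hvt)⟩

theorem IsPlanarRightAngledFlag.pole_unique {t t' r' a b : E3} (hL : IsPlanarRightAngledFlag L m)
    (ht : t ≠ t') (hr : t ≠ r') (hab : a ≠ b) (habL : {a, b} ∈ L.faces)
    (ha : a ∈ (rightAngledGraph L m).commonNeighbors t t')
    (hb : b ∈ (rightAngledGraph L m).commonNeighbors t t')
    (ha' : a ∈ (rightAngledGraph L m).commonNeighbors t r')
    (hb' : b ∈ (rightAngledGraph L m).commonNeighbors t r') : t' = r' := by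
  by_contra h
  exact hL.not_three_commonNeighbors hab habL ht hr h (left_mem_commonNeighbors ha hb)
    (right_mem_commonNeighbors ha hb) (right_mem_commonNeighbors ha' hb')

/-- Two infinite, maximal right-angled suspensions, with poles `t, t'` and `r, r'`, share the
2-simplex `{t, r, b}`, and only its vertices `t` and `r` are poles. -/
structure IsCrossing (L : SimplicialComplex ℝ E3) (m : E3 → E3 → ℕ) (t t' r r' b : E3) : Prop where
  poles : IsMaxPoles L m t t'
  poles' : IsMaxPoles L m r r'
  r_mem : r ∈ (rightAngledGraph L m).commonNeighbors t t'
  b_mem : b ∈ (rightAngledGraph L m).commonNeighbors t t'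
  t_mem : t ∈ (rightAngledGraph L m).commonNeighbors r r'
  b_mem' : b ∈ (rightAngledGraph L m).commonNeighbors r r'

namespace IsCrossing

variable {t t' r r' b d y : E3}

theorem symm (h : IsCrossing L m t t' r r' b) : IsCrossing L m r r' t t' b :=
  ⟨h.poles', h.poles, h.t_mem, h.b_mem', h.r_mem, h.b_mem⟩

theorem commonNeighbors_subset (h : IsCrossing L m t t' r r' b) (hL : IsPlanarRightAngledFlag L m)
    (hy : y ∈ (rightAngledGraph L m).commonNeighbors r r') (hyS : y ∉ ({t, b, t'} : Set E3)) :
    (rightAngledGraph L m).commonNeighbors t t' ⊆ {r, b, r', y} := by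
  intro x hx
  by_contra hxS
  obtain ⟨htr, ht'r⟩ := (SimpleGraph.mem_commonNeighbors _).1 h.r_mem
  obtain ⟨htb, ht'b⟩ := (SimpleGraph.mem_commonNeighbors _).1 h.b_mem
  obtain ⟨-, hr't⟩ := (SimpleGraph.mem_commonNeighbors _).1 h.t_mem
  obtain ⟨hrb, hr'b⟩ := (SimpleGraph.mem_commonNeighbors _).1 h.b_mem'
  obtain ⟨htx, ht'x⟩ := (SimpleGraph.mem_commonNeighbors _).1 hx
  obtain ⟨hry, hr'y⟩ := (SimpleGraph.mem_commonNeighbors _).1 hy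
  have hr't' : r' ≠ t' := by rintro rfl; exact h.poles.not_edge hr't.symm.2.1
  refine not_subdivided_k33_on_triangle hL.injects (a := r) (b := b) (t := t) (r := r') (r' := t')
    (x := x) (y := y) ?_ (hL.flag hrb htr.symm htb.ne' htb.symm.2.1) hr'b.symm.2.1 hr't.symm.2.1
    ht'r.symm.2.1 ht'b.symm.2.1 hry.2.1 hr'y.symm.2.1 htx.2.1 ht'x.symm.2.1
  have := h.poles.ne
  have := h.poles'.ne
  have := htr.ne; have := ht'r.ne; have := htb.ne; have := ht'b.ne; have := hr't.ne
  have := hrb.ne; have := hr'b.ne; have := htx.ne; have := ht'x.ne; have := hry.ne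
  have := hr'y.ne
  simp only [mem_insert_iff, mem_singleton_iff, not_or] at hxS hyS
  simp only [List.nodup_cons, List.mem_cons, List.not_mem_nil, List.nodup_nil]
  grind

theorem fullSusp_eq_of_subset (h : IsCrossing L m t t' r r' b) (hL : IsPlanarRightAngledFlag L m)
    (hN : (rightAngledGraph L m).commonNeighbors t t' ⊆ {r, b, r'}) :
    fullSusp L m t t' = fullSusp L m r r' := by
  have hr' : r' ∈ (rightAngledGraph L m).commonNeighbors t t' := by
    obtain ⟨c, hc, hcr, hcb⟩ := h.poles.exists_third r b
    obtain rfl | rfl | rfl := hN hc <;> trivial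
  refine h.poles.fullSusp_eq hL h.poles'.ne h.poles'.not_edge ?_
  rintro x ((rfl | rfl) | hx)
  · exact .inr h.t_mem
  · exact .inr (right_mem_commonNeighbors h.r_mem hr')
  · obtain rfl | rfl | rfl := hN hx
    · exact .inl (.inl rfl)
    · exact .inr h.b_mem'
    · exact .inl (.inr rfl)

theorem fullSusp_eq_of_common (h : IsCrossing L m t t' r r' b) (hL : IsPlanarRightAngledFlag L m)
    (hdb : d ≠ b) (hd : d ∈ (rightAngledGraph L m).commonNeighbors t t')
    (hd' : d ∈ (rightAngledGraph L m).commonNeighbors r r')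
    (hN : (rightAngledGraph L m).commonNeighbors t t' ⊆ {r, b, r', d}) :
    fullSusp L m t t' = fullSusp L m b d := by
  have ht : t ∈ (rightAngledGraph L m).commonNeighbors b d := left_mem_commonNeighbors h.b_mem hd
  have ht' : t' ∈ (rightAngledGraph L m).commonNeighbors b d :=
    right_mem_commonNeighbors h.b_mem hd
  have hr : r ∈ (rightAngledGraph L m).commonNeighbors b d := left_mem_commonNeighbors h.b_mem' hd'
  have hr' : r' ∈ (rightAngledGraph L m).commonNeighbors b d :=
    right_mem_commonNeighbors h.b_mem' hd'
  obtain ⟨htr, ht'r⟩ := (SimpleGraph.mem_commonNeighbors _).1 h.r_mem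
  have hbd : {b, d} ∉ L.faces := fun hbd ↦
    hL.not_three_commonNeighbors hdb.symm hbd h.poles.ne htr.ne ht'r.ne ht ht' hr
  refine h.poles.fullSusp_eq hL hdb.symm hbd ?_
  rintro x ((rfl | rfl) | hx)
  · exact .inr ht
  · exact .inr ht'
  · obtain rfl | rfl | rfl | rfl := hN hx
    · exact .inr hr
    · exact .inl (.inl rfl)
    · exact .inr hr'
    · exact .inl (.inr rfl)

theorem fullSusp_eq (h : IsCrossing L m t t' r r' b) (hL : IsPlanarRightAngledFlag L m) :
    fullSusp L m t t' = fullSusp L m r r' := by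
  by_cases hN : (rightAngledGraph L m).commonNeighbors t t' ⊆ {r, b, r'}
  · exact h.fullSusp_eq_of_subset hL hN
  by_cases hN' : (rightAngledGraph L m).commonNeighbors r r' ⊆ {t, b, t'}
  · exact (h.symm.fullSusp_eq_of_subset hL hN').symm
  obtain ⟨d, hd, hdN⟩ := not_subset.1 hN
  obtain ⟨d', hd', hdN'⟩ := not_subset.1 hN'
  have hsub := h.commonNeighbors_subset hL hd' hdN'
  have hsub' := h.symm.commonNeighbors_subset hL hd hdN
  simp only [mem_insert_iff, mem_singleton_iff, not_or] at hdN
  obtain ⟨hdr, hdb, hdr'⟩ := hdN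
  obtain rfl : d = d' := by simpa [hdr, hdb, hdr'] using hsub hd
  rw [h.fullSusp_eq_of_common hL hdb hd hd' hsub, h.symm.fullSusp_eq_of_common hL hdb hd' hd hsub']

end IsCrossing

theorem IsInfMaxRASusp.eq_of_common_two_simplex {S S' : Set (Finset E3)} {F : Finset E3}
    (hS : IsInfMaxRASusp L m S) (hS' : IsInfMaxRASusp L m S') (hL : IsPlanarRightAngledFlag L m)
    (hF : F ∈ S) (hF' : F ∈ S') (hcard : F.card = 3) : S = S' := by
  obtain ⟨t, t', hp, hSt, htF, hFt⟩ := hS.exists_isMaxPoles hL hF hcard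
  obtain ⟨r, r', hp', hSr, hrF, hFr⟩ := hS'.exists_isMaxPoles hL hF' hcard
  rw [hSt, hSr]
  obtain rfl | htr := eq_or_ne t r
  · have hcard' : (F.erase t).card = 2 := by rw [Finset.card_erase_of_mem htF, hcard]
    obtain ⟨a, b, hab, hFab⟩ := Finset.card_eq_two.1 hcard'
    obtain ⟨hat, haF⟩ : a ≠ t ∧ a ∈ F := Finset.mem_erase.1 (by simp [hFab])
    obtain ⟨hbt, hbF⟩ : b ≠ t ∧ b ∈ F := Finset.mem_erase.1 (by simp [hFab])
    have habL : {a, b} ∈ L.faces := edge_mem_faces (hSt ▸ hF : F ∈ fullSusp L m t t').1 haF hbF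
    rw [hL.pole_unique hp.ne hp'.ne hab habL (hFt a haF hat) (hFt b hbF hbt) (hFr a haF hat)
      (hFr b hbF hbt)]
  · obtain ⟨b, hbF, hb⟩ := Finset.exists_mem_notMem_of_card_lt_card
      (hcard ▸ Finset.card_le_two.trans_lt (by simp) : ({t, r} : Finset E3).card < F.card)
    simp only [Finset.mem_insert, Finset.mem_singleton, not_or] at hb
    have hcross : IsCrossing L m t t' r r' b :=
      ⟨hp, hp', hFt r hrF htr.symm, hFt b hbF hb.1, hFr t htF htr, hFr b hbF hb.2⟩
    exact hcross.fullSusp_eq hL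

theorem IsSeifertSubcomplex.exists_eq_sUnion {D : Set (Finset E3)} {F : Finset E3}
    (hD : IsSeifertSubcomplex L m D) (hF : F ∈ D) :
    ∃ S, IsInfMaxRASusp L m S ∧ F ∈ S ∧
      D = ⋃₀ {S' | IsInfMaxRASusp L m S' ∧ Relation.EqvGen (SeifertRel L m) S S'} := by
  obtain ⟨S₀, -, rfl⟩ := hD
  obtain ⟨S, ⟨hS, hS₀⟩, hFS⟩ := hF
  refine ⟨S, hS, hFS, congrArg sUnion (ext fun S' ↦ and_congr_right fun _ ↦ ?_)⟩
  exact ⟨(hS₀.symm _ _).trans _ _ _, hS₀.trans _ _ _⟩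

end MaxPoles

end CoxOrb

open CoxOrb

theorem seifert_no_common_two_simplex_general {L : SimplicialComplex ℝ E3} {m : E3 → E3 → ℕ}
    (hL : IsPlanarRightAngledFlag L m) {D₁ D₂ : Set (Finset E3)} (h₁ : IsSeifertSubcomplex L m D₁)
    (h₂ : IsSeifertSubcomplex L m D₂) (hne : D₁ ≠ D₂) {F : Finset E3} (hcard : F.card = 3) :
    ¬ (F ∈ D₁ ∧ F ∈ D₂) := by
  rintro ⟨hF₁, hF₂⟩
  obtain ⟨S₁, hS₁, hFS₁, rfl⟩ := h₁.exists_eq_sUnion hF₁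
  obtain ⟨S₂, hS₂, hFS₂, rfl⟩ := h₂.exists_eq_sUnion hF₂
  exact hne (by rw [hS₁.eq_of_common_two_simplex hS₂ hL hFS₁ hFS₂ hcard])

/-- Two distinct Seifert subcomplexes of a metric flag labeled triangulation of
the 2-sphere contain no common 2-simplex of `L`. -/
theorem seifert_no_common_two_simplex
    (L : SimplicialComplex ℝ E3) (m : E3 → E3 → ℕ)
    (hL : IsLabeledS2 L m) (hflag : MetricFlag L m)
    (D₁ D₂ : Set (Finset E3))
    (h₁ : IsSeifertSubcomplex L m D₁) (h₂ : IsSeifertSubcomplex L m D₂)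
    (hne : D₁ ≠ D₂) :
    ∀ F ∈ L.faces, F.card = 3 → ¬ (F ∈ D₁ ∧ F ∈ D₂) :=
  fun _ _ hcard ↦
    seifert_no_common_two_simplex_general (hL.isPlanarRightAngledFlag hflag) h₁ h₂ hne hcard
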